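/- Let G be an (m,n)-grid USO with global sink s, and let v = (i,j) be a vertex with v ≠ s. Then s ∉ I_v × J_v, i.e., the query of v eliminates every vertex of the subgrid I_v × J_v from being the global sink. -/

import Mathlib

/-!
The statement reduces to the fact that a grid USO is acyclic. Given acyclicity, `s.1 ∈ I_v` and
`s.2 ∈ J_v` mean that the edges joining `v` to `(s.1, v.2)` and `(v.1, s.2)` point *towards* `v`
(a reversed edge would close a directed cycle). Then `v` and `s` are two sinks of the `2 × 2`
subgrid spanned by them, which is impossible. If `v` and `s` share a line, `s` would have
an outgoing edge.

Acyclicity uses only that lines are linearly ordered and that no `2 × 2` subgrid is a directed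
cycle or has two sinks (`GridOrders`). By transitivity along lines, a directed cycle can be taken
alternating: `p₀ → q₀ → p₁ → q₁ → ⋯` with `p_t = (x_t, y_t)`, `q_t = (x_t, y_{t+1})` and `x`, `y`
of period `k`. Take `k` minimal. A shortcut would give a smaller `k`, so the `x_t` are distinct, the
`y_t` are distinct, and each cell `(x_i, y_j)` off the cycle either beats or loses to all four
vertices of the cycle in its row and column (`MinWalk.dichotomy`, `MinWalk.wrap`).
Two such cells that are opposite corners of a `2 × 2` subgrid whose other corners lie on the cycle
have opposite types, for otherwise that subgrid has two sinks. It follows that all off-cycle cells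
of a row have the same type and that the types of rows `r` and `r + d` differ for
`1 ≤ d ≤ k - 2`. Going through the rows `0, 1, k - 1, k` (the last being row `0` again) flips the
type three times, a contradiction when `k ≥ 3`; `k ≤ 2` is immediate.
-/

/-- Two vertices of the `(m,n)`-grid are adjacent iff they are distinct and agree
in the first coordinate (same row) or in the second coordinate (same column). -/
def GridAdj {m n : ℕ} (u v : Fin m × Fin n) : Prop :=
  u ≠ v ∧ (u.1 = v.1 ∨ u.2 = v.2)

/-- An orientation of the `(m,n)`-grid: every edge gets exactly one direction. -/
structure GridOrientation (m n : ℕ) where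
  dir : Fin m × Fin n → Fin m × Fin n → Bool
  dir_adj : ∀ u v, dir u v = true → GridAdj u v
  dir_total : ∀ u v, GridAdj u v → (dir u v = true ↔ dir v u = false)

/-- `v` is a sink of the subgrid `I × J`: it lies in the subgrid and has no
outgoing edge to any vertex of the subgrid. -/
def IsSinkIn {m n : ℕ} (o : GridOrientation m n) (I : Set (Fin m)) (J : Set (Fin n))
    (v : Fin m × Fin n) : Prop :=
  v.1 ∈ I ∧ v.2 ∈ J ∧ ∀ u : Fin m × Fin n, u.1 ∈ I → u.2 ∈ J → o.dir v u = false

/-- A unique sink orientation: every nonempty subgrid has exactly one sink. -/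
def IsUSO {m n : ℕ} (o : GridOrientation m n) : Prop :=
  ∀ (I : Set (Fin m)) (J : Set (Fin n)), I.Nonempty → J.Nonempty →
    ∃! v : Fin m × Fin n, IsSinkIn o I J v

/-- The global sink: the sink of the whole grid. -/
def IsGlobalSink {m n : ℕ} (o : GridOrientation m n) (v : Fin m × Fin n) : Prop :=
  IsSinkIn o Set.univ Set.univ v

/-- `u ⪰ v` : `u = v` or there is a directed path from `u` to `v`. -/
def Reaches {m n : ℕ} (o : GridOrientation m n) (u v : Fin m × Fin n) : Prop :=
  Relation.ReflTransGen (fun a b => o.dir a b = true) u v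

/-- `I_v`: the set of row indices `i'` with `(i', v.2) ⪰ v`. -/
def rowSet {m n : ℕ} (o : GridOrientation m n) (v : Fin m × Fin n) : Set (Fin m) :=
  {i' | Reaches o (i', v.2) v}

/-- `J_v`: the set of column indices `j'` with `(v.1, j') ⪰ v`. -/
def colSet {m n : ℕ} (o : GridOrientation m n) (v : Fin m × Fin n) : Set (Fin n) :=
  {j' | Reaches o (v.1, j') v}

/-! ### Grids with linearly ordered lines -/

/-- The local consequences of the USO property. `H r c c'` means that the edge in row `r` goes
from column `c` to column `c'`; `V c r r'` means that the edge in column `c` goes from row `r` to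
row `r'`. Every line is a strict linear order, and no `2 × 2` subgrid is a directed cycle or has
two sinks (equivalently, two sources). -/
structure GridOrders {R C : Type*} (H : R → C → C → Prop) (V : C → R → R → Prop) : Prop where
  hirr : ∀ r c, ¬ H r c c
  virr : ∀ c r, ¬ V c r r
  htrans : ∀ r a b c, H r a b → H r b c → H r a c
  vtrans : ∀ c r s t, V c r s → V c s t → V c r t
  htot : ∀ r a b, a ≠ b → H r a b ∨ H r b a
  vtot : ∀ c r s, r ≠ s → V c r s ∨ V c s r
  no_cycle : ∀ r r' c c', H r c c' → V c' r r' → H r' c' c → V c r' r → False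
  no_two : ∀ r r' c c', H r c c' → V c' r' r → H r' c' c → V c r r' → False

/-- Interchanging rows and columns. -/
theorem GridOrders.swap {R C : Type*} {H : R → C → C → Prop} {V : C → R → R → Prop}
    (g : GridOrders H V) : GridOrders V H where
  hirr := g.virr
  virr := g.hirr
  htrans := g.vtrans
  vtrans := g.htrans
  htot := g.vtot
  vtot := g.htot
  no_cycle := fun r r' c c' h1 h2 h3 h4 => g.no_cycle c' c r r' h2 h3 h4 h1
  no_two := fun r r' c c' h1 h2 h3 h4 => g.no_two c c' r r' h4 h3 h2 h1

/-! ### Closed alternating walks -/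

/-- A closed alternating walk with `2 * k` edges:
`(x t, y t) → (x t, y (t + 1)) → (x (t + 1), y (t + 1))` for all `t`, with `x` and `y` of
period `k`. -/
structure IsWalk {R C : Type*} (H : R → C → C → Prop) (V : C → R → R → Prop) (k : ℕ)
    (x : ℕ → R) (y : ℕ → C) : Prop where
  perx : ∀ t, x (t + k) = x t
  pery : ∀ t, y (t + k) = y t
  h : ∀ t, H (x t) (y t) (y (t + 1))
  v : ∀ t, V (y (t + 1)) (x t) (x (t + 1))

theorem IsWalk.swap {R C : Type*} {H : R → C → C → Prop} {V : C → R → R → Prop} {k : ℕ}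
    {x : ℕ → R} {y : ℕ → C} (w : IsWalk H V k x y) : IsWalk V H k (fun t => y (t + 1)) x where
  perx := fun t => by
    have := w.pery (t + 1)
    rwa [show t + 1 + k = t + k + 1 by ring] at this
  pery := w.perx
  h := w.v
  v := fun t => w.h (t + 1)

theorem IsWalk.shift {R C : Type*} {H : R → C → C → Prop} {V : C → R → R → Prop} {k : ℕ}
    {x : ℕ → R} {y : ℕ → C} (w : IsWalk H V k x y) (s : ℕ) :
    IsWalk H V k (fun t => x (s + t)) (fun t => y (s + t)) where
  perx := fun t => by rw [← Nat.add_assoc, w.perx]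
  pery := fun t => by rw [← Nat.add_assoc, w.pery]
  h := fun t => w.h (s + t)
  v := fun t => w.v (s + t)

/-- A finite alternating walk that returns to its start extends periodically. -/
theorem IsWalk.of_finite {R C : Type*} {H : R → C → C → Prop} {V : C → R → R → Prop} {k : ℕ}
    (hk : 1 ≤ k) {x : ℕ → R} {y : ℕ → C}
    (hlt : ∀ t, t + 1 < k → H (x t) (y t) (y (t + 1)) ∧ V (y (t + 1)) (x t) (x (t + 1)))
    (hlast : H (x (k - 1)) (y (k - 1)) (y 0) ∧ V (y 0) (x (k - 1)) (x 0)) :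
    IsWalk H V k (fun t => x (t % k)) (fun t => y (t % k)) := by
  have key : ∀ t, H (x (t % k)) (y (t % k)) (y ((t + 1) % k)) ∧
      V (y ((t + 1) % k)) (x (t % k)) (x ((t + 1) % k)) := by
    intro t
    have hl := Nat.mod_lt t (show 0 < k by omega)
    rw [← Nat.mod_add_mod t k 1]
    by_cases h : t % k + 1 < k
    · rw [Nat.mod_eq_of_lt h]
      exact hlt _ h
    · have e : t % k = k - 1 := by omega
      rw [e, Nat.sub_add_cancel hk, Nat.mod_self]
      exact hlast
  exact ⟨fun t => by simp, fun t => by simp, fun t => (key t).1, fun t => (key t).2⟩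

/-- A closed alternating walk of minimal length. -/
structure MinWalk {R C : Type*} (H : R → C → C → Prop) (V : C → R → R → Prop) (k : ℕ)
    (x : ℕ → R) (y : ℕ → C) : Prop extends IsWalk H V k x y where
  min : ∀ l, 1 ≤ l → l < k → ∀ x' y', ¬ IsWalk H V l x' y'

namespace MinWalk

variable {R C : Type*} {H : R → C → C → Prop} {V : C → R → R → Prop} {k : ℕ}
  {x : ℕ → R} {y : ℕ → C}

theorem swap (w : MinWalk H V k x y) : MinWalk V H k (fun t => y (t + 1)) x :=
  ⟨w.toIsWalk.swap, fun l h1 h2 _ _ w' => w.min l h1 h2 _ _ w'.swap⟩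

theorem shift (w : MinWalk H V k x y) (s : ℕ) :
    MinWalk H V k (fun t => x (s + t)) (fun t => y (s + t)) :=
  ⟨w.toIsWalk.shift s, w.min⟩

/-- No shortcut `p_b → (x_b, y_a) → p_a`. -/
theorem cut_row (w : MinWalk H V k x y) {a b : ℕ} (hab : a ≤ b) (hk : b + 1 < a + k)
    (h1 : H (x b) (y b) (y a)) (h2 : V (y a) (x b) (x a)) : False := by
  refine w.min (b - a + 1) (by omega) (by omega) _ _
    (IsWalk.of_finite (x := fun t => x (a + t)) (y := fun t => y (a + t)) (by omega) ?_ ?_)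
  · intro t _
    exact ⟨w.h (a + t), w.v (a + t)⟩
  · have e : a + (b - a + 1 - 1) = b := by omega
    simp only [e, Nat.add_zero]
    exact ⟨h1, h2⟩

/-- No shortcut `q_b → (x_a, y_{b+1}) → q_a`. -/
theorem cut_col (w : MinWalk H V k x y) {a b : ℕ} (hab : a ≤ b) (hk : b + 1 < a + k)
    (h1 : V (y (b + 1)) (x b) (x a)) (h2 : H (x a) (y (b + 1)) (y (a + 1))) : False :=
  w.swap.cut_row hab hk h1 h2

theorem x_ne (g : GridOrders H V) (w : MinWalk H V k x y) {a b : ℕ} (hab : a < b)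
    (hk : b < a + k) : x a ≠ x b := by
  intro e
  -- The vertices `p_b` and `q_a` share a row; each of their possible orders gives a shortcut.
  have hb : ¬ H (x b) (y b) (y (a + 1)) := fun h =>
    w.cut_row (a := a + 1) hab (by omega) h (e ▸ w.v a)
  have ha : ¬ H (x b) (y a) (y (b + 1)) := by
    intro h
    refine w.cut_row (a := b + 1) (b := a + k) (by omega) (by omega) ?_ ?_
    · rw [w.perx, w.pery, e]; exact h
    · rw [w.perx, e]; exact w.v b
  have h0 : H (x b) (y a) (y (a + 1)) := e ▸ w.h a
  by_cases hq : y b = y (a + 1)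
  · exact ha (g.htrans _ _ _ _ h0 (hq ▸ w.h b))
  · rcases g.htot (x b) _ _ hq with h | h
    · exact hb h
    · exact ha (g.htrans _ _ _ _ (g.htrans _ _ _ _ h0 h) (w.h b))

theorem y_ne (g : GridOrders H V) (w : MinWalk H V k x y) {a b : ℕ} (hab : a < b)
    (hk : b < a + k) : y a ≠ y b := by
  -- Interchanging rows and columns turns `y (t + 1)` into the row sequence, so go once around.
  have h := w.swap.x_ne g.swap (a := a + k - 1) (b := b + k - 1) (by omega) (by omega)
  rwa [show a + k - 1 + 1 = a + k by omega, show b + k - 1 + 1 = b + k by omega,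
    w.pery, w.pery] at h

/-! ### Types of the cells off the cycle -/

/-- An off-cycle cell `(x_i, y_{l+1})` that is beaten by `p_i` is beaten by `q_l` and
`p_{l+1}` too, while one that is not beaten by `p_i` beats `p_i`, `q_l` and `p_{l+1}`. -/
theorem dichotomy (g : GridOrders H V) (w : MinWalk H V k x y) {i l : ℕ} (h1 : i < l)
    (h2 : l + 1 < i + k) :
    (H (x i) (y i) (y (l + 1)) ∧ V (y (l + 1)) (x l) (x i) ∧ V (y (l + 1)) (x (l + 1)) (x i)) ∨
    (¬ H (x i) (y i) (y (l + 1)) ∧ H (x i) (y (l + 1)) (y i) ∧ V (y (l + 1)) (x i) (x l) ∧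
      V (y (l + 1)) (x i) (x (l + 1))) := by
  have c1 := w.cut_col (a := i) (b := l) h1.le (by omega)
  have c2 : H (x i) (y i) (y (l + 1)) → V (y (l + 1)) (x i) (x (l + 1)) → False := by
    have := w.cut_row (a := l + 1) (b := i + k) (by omega) (by omega)
    rwa [w.perx, w.pery] at this
  rcases g.vtot (y (l + 1)) _ _ (w.x_ne g h1 (by omega)) with h | h
  · have hv := g.vtrans _ _ _ _ h (w.v l)
    have hn : ¬ H (x i) (y i) (y (l + 1)) := fun h' => c2 h' hv
    have hh := (g.htot (x i) _ _ (w.y_ne g (a := i) (b := l + 1) (by omega) h2)).resolve_left hn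
    exact Or.inr ⟨hn, hh, h, hv⟩
  · have hq := (g.htot (x i) _ _
      (w.y_ne g (a := i + 1) (b := l + 1) (by omega) (by omega))).resolve_right (c1 h)
    have hp := g.htrans _ _ _ _ (w.h i) hq
    have hv := (g.vtot (y (l + 1)) _ _
      (w.x_ne g (a := i) (b := l + 1) (by omega) h2)).resolve_left (c2 hp)
    exact Or.inl ⟨hp, h, hv⟩

theorem neg (g : GridOrders H V) (w : MinWalk H V k x y) {i l : ℕ} (h1 : i < l)
    (h2 : l + 1 < i + k) (hs : H (x i) (y i) (y (l + 1))) :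
    V (y (l + 1)) (x l) (x i) ∧ V (y (l + 1)) (x (l + 1)) (x i) :=
  ((w.dichotomy g h1 h2).resolve_right fun h => h.1 hs).2

theorem pos (g : GridOrders H V) (w : MinWalk H V k x y) {i l : ℕ} (h1 : i < l)
    (h2 : l + 1 < i + k) (hs : ¬ H (x i) (y i) (y (l + 1))) :
    H (x i) (y (l + 1)) (y i) ∧ V (y (l + 1)) (x i) (x l) ∧ V (y (l + 1)) (x i) (x (l + 1)) :=
  ((w.dichotomy g h1 h2).resolve_left fun h => hs h.1).2

/-- The two types for the cell `(x_c, y_0)`, whose row contains `p_c`, `q_c` and whose column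
contains `p_0`. It is `dichotomy` for `(x_c, y_k)`, since `y_k = y_0`. -/
theorem wrap (g : GridOrders H V) (w : MinWalk H V k x y) {c : ℕ} (h0 : 0 < c)
    (h : c + 1 < k) :
    (H (x c) (y c) (y 0) ∧ H (x c) (y (c + 1)) (y 0) ∧ V (y 0) (x 0) (x c)) ∨
    (¬ H (x c) (y c) (y 0) ∧ H (x c) (y 0) (y c) ∧ H (x c) (y 0) (y (c + 1)) ∧
      V (y 0) (x c) (x 0)) := by
  have ex : x k = x 0 := by simpa using w.perx 0
  have ey : y k = y 0 := by simpa using w.pery 0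
  have d := w.dichotomy g (i := c) (l := k - 1) (by omega) (by omega)
  rw [Nat.sub_add_cancel (show 1 ≤ k by omega), ex, ey] at d
  rcases d with ⟨a1, a2, a3⟩ | ⟨a1, a2, a3, a4⟩
  · refine Or.inl ⟨a1, ?_, a3⟩
    have hne : y 0 ≠ y (c + 1) := w.y_ne g (by omega) (by omega)
    refine (g.htot (x c) _ _ hne).resolve_left fun h' => ?_
    refine w.cut_col (a := c) (b := k - 1) (by omega) (by omega) ?_ ?_
    · rw [Nat.sub_add_cancel (show 1 ≤ k by omega), ey]; exact a2
    · rw [Nat.sub_add_cancel (show 1 ≤ k by omega), ey]; exact h'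
  · exact Or.inr ⟨a1, a2, g.htrans _ _ _ _ a2 (w.h c), a4⟩

/-- The cells `(x_0, y_{c+1})` and `(x_c, y_0)` have opposite types: the other two corners of
their `2 × 2` subgrid are `p_0` and `q_c`. -/
theorem opp_pq (g : GridOrders H V) (w : MinWalk H V k x y) {c : ℕ} (h0 : 0 < c)
    (h : c + 1 < k) : H (x 0) (y 0) (y (c + 1)) ↔ ¬ H (x c) (y c) (y 0) := by
  by_cases hs : H (x 0) (y 0) (y (c + 1))
  · have n := w.neg g h0 (by omega) hs
    rcases w.wrap g h0 h with ⟨_, b2, b3⟩ | ⟨b1, _⟩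
    · exact (g.no_two _ _ _ _ hs n.1 b2 b3).elim
    · exact iff_of_true hs b1
  · have n := w.pos g h0 (by omega) hs
    rcases w.wrap g h0 h with ⟨b1, _⟩ | ⟨_, _, b3, b4⟩
    · exact iff_of_false hs (not_not.2 b1)
    · exact (g.no_two _ _ _ _ n.1 b4 b3 n.2.1).elim

/-- The cells `(x_0, y_c)` and `(x_c, y_0)` have opposite types: the other two corners of
their `2 × 2` subgrid are `p_0` and `p_c`. -/
theorem opp_pp (g : GridOrders H V) (w : MinWalk H V k x y) {c : ℕ} (h0 : 1 < c)
    (h : c + 1 < k) : H (x 0) (y 0) (y c) ↔ ¬ H (x c) (y c) (y 0) := by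
  obtain ⟨l, rfl⟩ : ∃ l, c = l + 1 := ⟨c - 1, by omega⟩
  by_cases hs : H (x 0) (y 0) (y (l + 1))
  · have n := w.neg g (by omega) (by omega) hs
    rcases w.wrap g (by omega) h with ⟨b1, _, b3⟩ | ⟨b1, _⟩
    · exact (g.no_two _ _ _ _ hs n.2 b1 b3).elim
    · exact iff_of_true hs b1
  · have n := w.pos g (by omega) (by omega) hs
    rcases w.wrap g (by omega) h with ⟨b1, _⟩ | ⟨_, b2, _, b4⟩
    · exact iff_of_false hs (not_not.2 b1)
    · exact (g.no_two _ _ _ _ n.1 b4 b2 n.2.2).elim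

/-- All off-cycle cells of row `x_0` have the same type. -/
theorem row_const (g : GridOrders H V) (w : MinWalk H V k x y) (d : ℕ) (h : d + 2 < k) :
    H (x 0) (y 0) (y (d + 2)) ↔ H (x 0) (y 0) (y 2) := by
  induction d with
  | zero => rfl
  | succ d ih =>
    rw [← ih (by omega), w.opp_pp g (c := d + 2) (by omega) (by omega)]
    exact w.opp_pq g (c := d + 2) (by omega) (by omega)

/-- The off-cycle cells of rows `x_r` and `x_{r+d}` have opposite types. -/
theorem row_opp (g : GridOrders H V) (w : MinWalk H V k x y) (r : ℕ) {d : ℕ} (h0 : 0 < d)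
    (h : d + 1 < k) :
    H (x r) (y r) (y (r + 2)) ↔ ¬ H (x (r + d)) (y (r + d)) (y (r + d + 2)) := by
  have e1 := (w.shift r).row_const g (d - 1) (by omega)
  have e2 := (w.shift r).opp_pq g h0 h
  have e3 := (w.shift (r + d)).row_const g (k - d - 2) (by omega)
  simp only [Nat.add_zero] at e1 e2 e3
  rw [show r + d + (k - d - 2 + 2) = r + k by omega, w.pery] at e3
  rw [show d - 1 + 2 = d + 1 by omega] at e1
  rw [← e1, ← e3, e2]

theorem absurd (g : GridOrders H V) (w : MinWalk H V k x y) (hk : 1 ≤ k) : False := by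
  have ex : x k = x 0 := by simpa using w.perx 0
  have ey : y k = y 0 := by simpa using w.pery 0
  rcases (by omega : k = 1 ∨ k = 2 ∨ 3 ≤ k) with rfl | rfl | h3
  · have := w.h 0
    rw [Nat.zero_add, ey] at this
    exact g.hirr _ _ this
  · have a := w.h 1
    have b := w.v 1
    rw [ey] at a b
    rw [ex] at b
    exact g.no_cycle _ _ _ _ (w.h 0) (w.v 0) a b
  · have a := w.row_opp g 0 (d := 1) (by omega) (by omega)
    have b := w.row_opp g 1 (d := k - 2) (by omega) (by omega)
    have c := w.row_opp g (k - 1) (d := 1) (by omega) (by omega)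
    rw [show 1 + (k - 2) = k - 1 by omega] at b
    rw [show k - 1 + 1 = k by omega, show k + 2 = 2 + k by omega, w.pery, ex, ey] at c
    simp only [Nat.zero_add] at a
    tauto

end MinWalk

theorem GridOrders.no_walk {R C : Type*} {H : R → C → C → Prop} {V : C → R → R → Prop}
    (g : GridOrders H V) (k : ℕ) (hk : 1 ≤ k) (x : ℕ → R) (y : ℕ → C) :
    ¬ IsWalk H V k x y := by
  induction k using Nat.strong_induction_on generalizing x y with
  | _ k ih => exact fun w => MinWalk.absurd g ⟨w, fun l h1 h2 x' y' => ih l h2 h1 x' y'⟩ hk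

/-! ### From directed paths to alternating walks -/

section Paths

variable {R C : Type*} {H : R → C → C → Prop} {V : C → R → R → Prop}

/-- A row step followed by a column step. -/
def DoubleStep (H : R → C → C → Prop) (V : C → R → R → Prop) (u w : R × C) : Prop :=
  H u.1 u.2 w.2 ∧ V w.2 u.1 w.1

/-- A single step in a row or in a column. -/
inductive GridStep (H : R → C → C → Prop) (V : C → R → R → Prop) : R × C → R × C → Prop
  | row (r : R) (c c' : C) : H r c c' → GridStep H V (r, c) (r, c')
  | col (r r' : R) (c : C) : V c r r' → GridStep H V (r, c) (r', c)

theorem exists_seq {α : Type*} {D : α → α → Prop} {u w : α} (h : Relation.ReflTransGen D u w) :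
    ∃ (k : ℕ) (f : ℕ → α), f 0 = u ∧ f k = w ∧ ∀ t < k, D (f t) (f (t + 1)) := by
  induction h using Relation.ReflTransGen.head_induction_on with
  | refl => exact ⟨0, fun _ => w, rfl, rfl, by simp⟩
  | @head a b hab _ ih =>
    obtain ⟨k, f, h0, hk, hf⟩ := ih
    refine ⟨k + 1, fun t => Nat.casesOn t a f, rfl, hk, ?_⟩
    rintro (_ | t) ht
    · simpa [h0] using hab
    · exact hf t (by omega)

theorem GridOrders.no_double_cycle (g : GridOrders H V) {u w : R × C}
    (h : Relation.ReflTransGen (DoubleStep H V) u w) (hw : DoubleStep H V w u) : False := by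
  obtain ⟨k, f, rfl, rfl, hf⟩ := exists_seq h
  refine g.no_walk (k + 1) (by omega) _ _
    (IsWalk.of_finite (x := fun t => (f t).1) (y := fun t => (f t).2) (by omega) ?_ hw)
  intro t ht
  exact hf t (by omega)

/-- By transitivity along lines, every directed path can be replaced by an optional column step,
a sequence of double steps, and an optional row step. -/
theorem GridOrders.normal_form (g : GridOrders H V) {u w : R × C}
    (h : Relation.ReflTransGen (GridStep H V) u w) :
    ∃ r c, (u.1 = r ∨ V u.2 u.1 r) ∧
      Relation.ReflTransGen (DoubleStep H V) (r, u.2) (w.1, c) ∧ (c = w.2 ∨ H w.1 c w.2) := by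
  induction h with
  | refl => exact ⟨u.1, u.2, Or.inl rfl, .refl, Or.inl rfl⟩
  | tail _ hs ih =>
    obtain ⟨r, c, h1, h2, h3⟩ := ih
    cases hs with
    | row p a b hab =>
      refine ⟨r, c, h1, h2, Or.inr ?_⟩
      rcases h3 with rfl | h3
      · exact hab
      · exact g.htrans _ _ _ _ h3 hab
    | col p q a hpq =>
      rcases h3 with rfl | h3
      -- The new column step merges with the preceding one.
      · rcases Relation.ReflTransGen.cases_tail h2 with e | ⟨z, hz, hd⟩
        · simp only [Prod.mk.injEq] at e
          obtain ⟨rfl, rfl⟩ := e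
          refine ⟨q, u.2, Or.inr ?_, .refl, Or.inl rfl⟩
          rcases h1 with h1 | h1
          · rw [h1]; exact hpq
          · exact g.vtrans _ _ _ _ h1 hpq
        · exact ⟨r, _, h1, hz.tail ⟨hd.1, g.vtrans _ _ _ _ hd.2 hpq⟩, Or.inl rfl⟩
      · exact ⟨r, a, h1, h2.tail ⟨h3, hpq⟩, Or.inl rfl⟩

/-- A grid satisfying `GridOrders` has no directed cycle. -/
theorem GridOrders.acyclic (g : GridOrders H V) {u w : R × C}
    (h : Relation.ReflTransGen (GridStep H V) u w) (hw : GridStep H V w u) : False := by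
  obtain ⟨r, c, h1, h2, h3⟩ := g.normal_form h
  cases hw with
  | row p a b hab =>
    have hcb : H p c b := by
      rcases h3 with rfl | h3
      · exact hab
      · exact g.htrans _ _ _ _ h3 hab
    rcases h1 with rfl | h1
    -- The closing row step merges with the first step of the walk.
    · rcases Relation.ReflTransGen.cases_head h2 with e | ⟨z, hd, hz⟩
      · simp only [Prod.mk.injEq, true_and] at e
        exact g.hirr _ _ (e ▸ hcb)
      · exact g.no_double_cycle hz ⟨g.htrans _ _ _ _ hcb hd.1, hd.2⟩
    · exact g.no_double_cycle h2 ⟨hcb, h1⟩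
  | col p q a hpq =>
    have hpr : V a p r := by
      rcases h1 with rfl | h1
      · exact hpq
      · exact g.vtrans _ _ _ _ hpq h1
    rcases h3 with rfl | h3
    -- The closing column step merges with the last step of the walk.
    · rcases Relation.ReflTransGen.cases_tail h2 with e | ⟨z, hz, hd⟩
      · simp only [Prod.mk.injEq, and_true] at e
        exact g.virr _ _ (e ▸ hpr)
      · exact g.no_double_cycle hz ⟨hd.1, g.vtrans _ _ _ _ hd.2 hpr⟩
    · exact g.no_double_cycle h2 ⟨h3, hpr⟩

end Paths

/-! ### Grid USOs -/

section USO

variable {m n : ℕ} (o : GridOrientation m n)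

theorem dir_irrefl (u : Fin m × Fin n) : o.dir u u ≠ true := fun h => (o.dir_adj u u h).1 rfl

theorem dir_asymm {u v : Fin m × Fin n} (h : o.dir u v = true) : o.dir v u = false :=
  (o.dir_total u v (o.dir_adj u v h)).1 h

theorem dir_or {u v : Fin m × Fin n} (h : GridAdj u v) : o.dir u v = true ∨ o.dir v u = true := by
  cases h' : o.dir v u
  · exact Or.inl ((o.dir_total u v h).2 h')
  · exact Or.inr rfl

/-- Vertices not in a common line are not joined by an edge. -/
theorem dir_eq_false {u v : Fin m × Fin n} (h1 : u.1 ≠ v.1) (h2 : u.2 ≠ v.2) :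
    o.dir u v = false := by
  by_contra h
  rcases (o.dir_adj u v (by simpa using h)).2 with h | h
  · exact h1 h
  · exact h2 h

theorem IsUSO.gridOrders {o : GridOrientation m n} (h : IsUSO o) :
    GridOrders (fun r c c' => o.dir (r, c) (r, c') = true)
      (fun c r r' => o.dir (r, c) (r', c) = true) where
  hirr := fun _ _ => dir_irrefl o _
  virr := fun _ _ => dir_irrefl o _
  htrans := fun r a b c h1 h2 => by
    -- Otherwise the subgrid `{r} × {a, b, c}` has no sink.
    by_contra h3
    have hca : a = c ∨ o.dir (r, c) (r, a) = true := by
      by_cases e : a = c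
      · exact Or.inl e
      · exact Or.inr ((dir_or o (u := (r, a)) (v := (r, c))
          ⟨by simpa using e, Or.inl rfl⟩).resolve_left h3)
    rcases hca with rfl | h4
    · simp [dir_asymm o h1] at h2
    · obtain ⟨⟨p, q⟩, ⟨hp, hq, hs⟩, -⟩ := h {r} {a, b, c} (by simp) (by simp)
      simp only [Set.mem_singleton_iff, Set.mem_insert_iff] at hp hq
      subst hp
      rcases hq with rfl | rfl | rfl
      · simpa [h1] using hs (p, b) (by simp) (by simp)
      · simpa [h2] using hs (p, c) (by simp) (by simp)
      · simpa [h4] using hs (p, a) (by simp) (by simp)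
  vtrans := fun r a b c h1 h2 => by
    -- Otherwise the subgrid `{a, b, c} × {r}` has no sink.
    by_contra h3
    have hca : a = c ∨ o.dir (c, r) (a, r) = true := by
      by_cases e : a = c
      · exact Or.inl e
      · exact Or.inr ((dir_or o (u := (a, r)) (v := (c, r))
          ⟨by simpa using e, Or.inr rfl⟩).resolve_left h3)
    rcases hca with rfl | h4
    · simp [dir_asymm o h1] at h2
    · obtain ⟨⟨q, p⟩, ⟨hq, hp, hs⟩, -⟩ := h {a, b, c} {r} (by simp) (by simp)
      simp only [Set.mem_singleton_iff, Set.mem_insert_iff] at hp hq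
      subst hp
      rcases hq with rfl | rfl | rfl
      · simpa [h1] using hs (b, p) (by simp) (by simp)
      · simpa [h2] using hs (c, p) (by simp) (by simp)
      · simpa [h4] using hs (a, p) (by simp) (by simp)
  htot := fun r a b hab => dir_or o ⟨by simpa using hab, Or.inl rfl⟩
  vtot := fun c r s hrs => dir_or o ⟨by simpa using hrs, Or.inr rfl⟩
  no_cycle := fun r r' c c' h1 h2 h3 h4 => by
    obtain ⟨⟨p, q⟩, ⟨hp, hq, hs⟩, -⟩ := h {r, r'} {c, c'} (by simp) (by simp)
    simp only [Set.mem_singleton_iff, Set.mem_insert_iff] at hp hq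
    rcases hp with rfl | rfl <;> rcases hq with rfl | rfl
    · simpa [h1] using hs (p, c') (by simp) (by simp)
    · simpa [h2] using hs (r', q) (by simp) (by simp)
    · simpa [h4] using hs (r, q) (by simp) (by simp)
    · simpa [h3] using hs (p, c) (by simp) (by simp)
  no_two := fun r r' c c' h1 h2 h3 h4 => by
    have hr : r ≠ r' := by
      rintro rfl
      exact dir_irrefl o _ h2
    have hc : c ≠ c' := by
      rintro rfl
      exact dir_irrefl o _ h1
    -- Two edges entering `(a, b)` make it a sink of a `2 × 2` subgrid.
    have sink : ∀ a a' b b', a ≠ a' → b ≠ b' → o.dir (a, b') (a, b) = true →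
        o.dir (a', b) (a, b) = true → ∀ u : Fin m × Fin n, (u.1 = a ∨ u.1 = a') →
        (u.2 = b ∨ u.2 = b') → o.dir (a, b) u = false := by
      rintro a a' b b' ha hb e1 e2 ⟨u1, u2⟩ (rfl | rfl) (rfl | rfl)
      · simpa using dir_irrefl o _
      · exact dir_asymm o e1
      · exact dir_asymm o e2
      · exact dir_eq_false o ha hb
    have key := (h {r, r'} {c, c'} (by simp) (by simp)).unique
      (y₁ := (r, c')) (y₂ := (r', c))
      ⟨by simp, by simp, fun u hu hv => sink r r' c' c hr hc.symm h1 h2 u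
        (by simpa using hu) (by simpa [or_comm] using hv)⟩
      ⟨by simp, by simp, fun u hu hv => sink r' r c c' hr.symm hc h3 h4 u
        (by simpa [or_comm] using hu) (by simpa using hv)⟩
    exact hr (congrArg Prod.fst key)

theorem IsUSO.acyclic {o : GridOrientation m n} (h : IsUSO o) {u w : Fin m × Fin n}
    (huw : Reaches o u w) (hwu : o.dir w u = true) : False := by
  have step : ∀ a b : Fin m × Fin n, o.dir a b = true →
      GridStep (fun r c c' => o.dir (r, c) (r, c') = true)
        (fun c r r' => o.dir (r, c) (r', c) = true) a b := by
    rintro ⟨a1, a2⟩ ⟨b1, b2⟩ hab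
    rcases (o.dir_adj _ _ hab).2 with e | e
    · obtain rfl : a1 = b1 := e
      exact .row _ _ _ hab
    · obtain rfl : a2 = b2 := e
      exact .col _ _ _ hab
  exact h.gridOrders.acyclic (Relation.ReflTransGen.mono step _ _ huw) (step _ _ hwu)

end USO

/-- if `v` is not the global sink `s`, then `s` does not belong to the
subgrid `I_v × J_v`; i.e. querying `v` eliminates all of `I_v × J_v`. -/
theorem query_eliminates_subgrid {m n : ℕ} (o : GridOrientation m n) (h : IsUSO o)
    (s : Fin m × Fin n) (hs : IsGlobalSink o s) (v : Fin m × Fin n) (hv : v ≠ s) :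
    ¬ (s.1 ∈ rowSet o v ∧ s.2 ∈ colSet o v) := by
  obtain ⟨i, j⟩ := v
  obtain ⟨a, b⟩ := s
  rintro ⟨hI, hJ⟩
  have hI : Reaches o (a, j) (i, j) := hI
  have hJ : Reaches o (i, b) (i, j) := hJ
  have sink : ∀ u, o.dir (a, b) u = false := fun u => hs.2.2 u trivial trivial
  have stuck : ¬ Reaches o (a, b) (i, j) := by
    intro hr
    rcases Relation.ReflTransGen.cases_head hr with e | ⟨z, hz, _⟩
    · exact hv e.symm
    · simp [sink z] at hz
  have hai : a ≠ i := by
    rintro rfl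
    exact stuck hJ
  have hbj : b ≠ j := by
    rintro rfl
    exact stuck hI
  have e1 := (dir_or o (u := (a, j)) (v := (i, j))
    ⟨by simpa using hai, Or.inr rfl⟩).resolve_right (h.acyclic hI)
  have e2 := (dir_or o (u := (i, b)) (v := (i, j))
    ⟨by simpa using hbj, Or.inl rfl⟩).resolve_right (h.acyclic hJ)
  have e3 := (dir_or o (u := (a, b)) (v := (a, j))
    ⟨by simpa using hbj, Or.inl rfl⟩).resolve_left (by simp [sink])
  have e4 := (dir_or o (u := (a, b)) (v := (i, b))
    ⟨by simpa using hai, Or.inr rfl⟩).resolve_left (by simp [sink])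
  exact h.gridOrders.no_two i a b j e2 e1 e3 e4
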